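/- (Singleton bound for (P,w,π)-block codes) Let C ⊆ 𝔽_q^N be a code with at least two codewords, minimum distance d_{(P,w,π)}(C), and let r = ⌊(d_{(P,w,π)}(C)−1)/M_w⌋. Then max_{J ∈ 𝓘^r} Σ_{i∈J} k_i ≤ N − ⌈log_q |C|⌉; that is, for every ideal J of P of cardinality r, Σ_{i∈J} k_i ≤ N − ⌈log_q |C|⌉. -/

import Mathlib

open scoped Classical

noncomputable section

variable {F : Type*} [Field F] [Fintype F]
variable {ι : Type*} [Fintype ι] [PartialOrder ι]

/-- The block weight induced by `w`: the maximum of the weights of the coordinates. -/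
def blockWt (w : F → ℕ) {m : ℕ} (v : Fin m → F) : ℕ :=
  Finset.univ.sup fun t => w (v t)

/-- `M_w`, the maximum weight of an element of `F`. -/
def maxWt (w : F → ℕ) : ℕ := Finset.univ.sup w

/-- `D_r = {α ∈ F : w(α) = r}`. -/
def Dset (w : F → ℕ) (r : ℕ) : Finset F := Finset.univ.filter fun a => w a = r

/-- `D_r^k = {v ∈ F^k : w̃^k(v) = r}`. -/
def Dk (w : F → ℕ) (m r : ℕ) : Finset (Fin m → F) :=
  Finset.univ.filter fun v => blockWt w v = r

/-- The order ideal (down-set) of the poset generated by a finite set `A`. -/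
def genIdeal (A : Finset ι) : Finset ι := Finset.univ.filter fun i => ∃ j ∈ A, i ≤ j

/-- The set of maximal elements of a finite set `I`. -/
def maxElems (I : Finset ι) : Finset ι := I.filter fun i => ∀ j ∈ I, i ≤ j → j = i

/-- `I` is an order ideal (down-set) of the poset. -/
def IsIdeal (I : Finset ι) : Prop := ∀ a b : ι, a ≤ b → b ∈ I → a ∈ I

/-- The collection `𝓘_j^i` of ideals of cardinality `i` with exactly `j` maximal elements. -/
def idealsWithMax (ι : Type*) [Fintype ι] [PartialOrder ι] (j i : ℕ) : Finset (Finset ι) :=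
  Finset.univ.filter fun I => IsIdeal I ∧ I.card = i ∧ (maxElems I).card = j

/-- The π-support of a block vector. -/
def suppPi (k : ι → ℕ) (x : ∀ i, Fin (k i) → F) : Finset ι :=
  Finset.univ.filter fun i => x i ≠ 0

/-- The `(P,w,π)`-weight. -/
def wtP (w : F → ℕ) (k : ι → ℕ) (x : ∀ i, Fin (k i) → F) : ℕ :=
  ∑ i ∈ maxElems (genIdeal (suppPi k x)), blockWt w (x i)
    + maxWt w * ((genIdeal (suppPi k x)) \ maxElems (genIdeal (suppPi k x))).card

/-- The `(P,w,π)`-distance. -/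
def dP (w : F → ℕ) (k : ι → ℕ) (x y : ∀ i, Fin (k i) → F) : ℕ := wtP w k (x - y)

/-!
Two codewords that agree outside an ideal `J` differ by a vector supported in `J`, and `J` then
contains the ideal generated by that support; hence they are at distance at most `M_w * |J|`. When
this is less than the minimum distance, deleting the blocks in `J` is injective on the code, so the
code has at most `q ^ (N - ∑ i ∈ J, k i)` elements.
-/

lemma card_le_pow_sum_of_injOn_restrict {α κ : Type*} [Fintype α] (k : κ → ℕ)
    (C : Finset (∀ i, Fin (k i) → α)) (S : Finset κ)
    (hinj : Set.InjOn S.restrict (C : Set (∀ i, Fin (k i) → α))) :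
    C.card ≤ Fintype.card α ^ ∑ i ∈ S, k i :=
  calc C.card ≤ Fintype.card (∀ i : S, Fin (k i) → α) :=
        Finset.card_le_card_of_injOn _ (fun _ _ => Finset.mem_univ _) hinj
    _ = Fintype.card α ^ ∑ i ∈ S, k i := by
        simp only [Fintype.card_pi, Fintype.card_fin, Finset.prod_const, Finset.card_univ,
          Finset.prod_pow_eq_pow_sum, Finset.sum_coe_sort]

lemma sum_add_clog_card_le_of_injOn_restrict_compl {α κ : Type*} [Fintype α] [Fintype κ]
    (k : κ → ℕ) (C : Finset (∀ i, Fin (k i) → α)) (J : Finset κ)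
    (hinj : Set.InjOn Jᶜ.restrict (C : Set (∀ i, Fin (k i) → α))) :
    ∑ i ∈ J, k i + Nat.clog (Fintype.card α) C.card ≤ ∑ i, k i :=
  calc ∑ i ∈ J, k i + Nat.clog (Fintype.card α) C.card
      ≤ ∑ i ∈ J, k i + ∑ i ∈ Jᶜ, k i := by
        gcongr
        exact Nat.clog_le_of_le_pow (card_le_pow_sum_of_injOn_restrict k C Jᶜ hinj)
    _ = ∑ i, k i := Finset.sum_add_sum_compl J k

lemma blockWt_le_maxWt {α : Type*} [Fintype α] (w : α → ℕ) {m : ℕ} (v : Fin m → α) :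
    blockWt w v ≤ maxWt w :=
  Finset.sup_le fun t _ => Finset.le_sup (f := w) (Finset.mem_univ (v t))

lemma blockWt_pos {α : Type*} [Zero α] {w : α → ℕ} (hw : ∀ a, w a = 0 → a = 0) {m : ℕ}
    {v : Fin m → α} (hv : v ≠ 0) : 0 < blockWt w v := by
  obtain ⟨t, ht⟩ := Function.ne_iff.mp hv
  exact (Nat.pos_of_ne_zero (mt (hw _) ht)).trans_le
    (Finset.le_sup (f := fun t => w (v t)) (Finset.mem_univ t))

lemma genIdeal_subset {A J : Finset ι} (hJ : IsIdeal J) (hA : A ⊆ J) : genIdeal A ⊆ J := by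
  intro i hi
  obtain ⟨j, hj, hij⟩ := (Finset.mem_filter.mp hi).2
  exact hJ i j hij (hA hj)

lemma exists_mem_maxElems_genIdeal {A : Finset ι} (hA : A.Nonempty) :
    ∃ m ∈ A, m ∈ maxElems (genIdeal A) := by
  obtain ⟨m, hm⟩ := A.exists_maximal hA
  refine ⟨m, hm.prop, Finset.mem_filter.mpr
    ⟨Finset.mem_filter.mpr ⟨Finset.mem_univ m, m, hm.prop, le_rfl⟩, fun j hj hmj => ?_⟩⟩
  obtain ⟨a, ha, hja⟩ := (Finset.mem_filter.mp hj).2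
  exact le_antisymm (hja.trans (hm.le_of_ge ha (hmj.trans hja))) hmj

lemma suppPi_nonempty {α κ : Type*} [Field α] [Fintype κ] (k : κ → ℕ)
    {x : ∀ i, Fin (k i) → α} (hx : x ≠ 0) : (suppPi k x).Nonempty := by
  obtain ⟨i, hi⟩ := Function.ne_iff.mp hx
  exact ⟨i, Finset.mem_filter.mpr ⟨Finset.mem_univ i, hi⟩⟩

lemma suppPi_sub_subset_iff {α κ : Type*} [Field α] [Fintype κ] (k : κ → ℕ) {J : Finset κ}
    {x y : ∀ i, Fin (k i) → α} :
    suppPi k (x - y) ⊆ J ↔ Jᶜ.restrict x = Jᶜ.restrict y := by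
  simp [suppPi, Finset.subset_iff, funext_iff (f := Jᶜ.restrict x), sub_eq_zero, not_imp_comm]

lemma wtP_le_maxWt_mul_card_genIdeal (w : F → ℕ) (k : ι → ℕ) (x : ∀ i, Fin (k i) → F) :
    wtP w k x ≤ maxWt w * (genIdeal (suppPi k x)).card := by
  set I := genIdeal (suppPi k x)
  have hmax : maxElems I ⊆ I := Finset.filter_subset _ _
  calc ∑ i ∈ maxElems I, blockWt w (x i) + maxWt w * (I \ maxElems I).card
      ≤ (maxElems I).card * maxWt w + maxWt w * (I \ maxElems I).card := by
        gcongr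
        exact Finset.sum_le_card_nsmul _ _ _ fun i _ => blockWt_le_maxWt w (x i)
    _ = maxWt w * ((I \ maxElems I).card + (maxElems I).card) := by ring
    _ = maxWt w * I.card := by rw [Finset.card_sdiff_add_card_eq_card hmax]

lemma wtP_le_maxWt_mul_card (w : F → ℕ) (k : ι → ℕ) {J : Finset ι} (hJ : IsIdeal J)
    {x : ∀ i, Fin (k i) → F} (hx : suppPi k x ⊆ J) : wtP w k x ≤ maxWt w * J.card :=
  (wtP_le_maxWt_mul_card_genIdeal w k x).trans <|
    Nat.mul_le_mul_left _ (Finset.card_le_card (genIdeal_subset hJ hx))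

lemma wtP_pos {w : F → ℕ} (hw : ∀ a, w a = 0 → a = 0) (k : ι → ℕ) {x : ∀ i, Fin (k i) → F}
    (hx : x ≠ 0) : 0 < wtP w k x := by
  obtain ⟨m, hm, hmax⟩ := exists_mem_maxElems_genIdeal (suppPi_nonempty k hx)
  calc 0 < blockWt w (x m) := blockWt_pos hw (Finset.mem_filter.mp hm).2
    _ ≤ ∑ i ∈ maxElems (genIdeal (suppPi k x)), blockWt w (x i) :=
        Finset.single_le_sum (f := fun i => blockWt w (x i)) (fun _ _ => Nat.zero_le _) hmax
    _ ≤ wtP w k x := Nat.le_add_right _ _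

/-- The minimum distance of a code. It is `0` (the infimum of the empty set) when the code has
fewer than two codewords. -/
def minDist (w : F → ℕ) (k : ι → ℕ) (C : Finset (∀ i, Fin (k i) → F)) : ℕ :=
  sInf {s : ℕ | ∃ c₁ ∈ C, ∃ c₂ ∈ C, c₁ ≠ c₂ ∧ dP w k c₁ c₂ = s}

lemma pairwise_minDist_le_dP (w : F → ℕ) (k : ι → ℕ) (C : Finset (∀ i, Fin (k i) → F)) :
    (C : Set (∀ i, Fin (k i) → F)).Pairwise fun c₁ c₂ => minDist w k C ≤ dP w k c₁ c₂ :=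
  fun c₁ h₁ c₂ h₂ hne => Nat.sInf_le ⟨c₁, h₁, c₂, h₂, hne, rfl⟩

lemma minDist_pos {w : F → ℕ} (hw : ∀ a, w a = 0 → a = 0) (k : ι → ℕ)
    {C : Finset (∀ i, Fin (k i) → F)} (hC : 1 < C.card) : 0 < minDist w k C := by
  obtain ⟨a, ha, b, hb, hab⟩ := Finset.one_lt_card.mp hC
  obtain ⟨c₁, -, c₂, -, hne, hdist⟩ : minDist w k C ∈
      {s : ℕ | ∃ c₁ ∈ C, ∃ c₂ ∈ C, c₁ ≠ c₂ ∧ dP w k c₁ c₂ = s} :=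
    Nat.sInf_mem ⟨_, a, ha, b, hb, hab, rfl⟩
  exact hdist ▸ wtP_pos hw k (sub_ne_zero.mpr hne)

lemma injOn_restrict_compl_of_maxWt_mul_card_lt (w : F → ℕ) (k : ι → ℕ)
    {C : Set (∀ i, Fin (k i) → F)} {d : ℕ} (hd : C.Pairwise fun c₁ c₂ => d ≤ dP w k c₁ c₂)
    {J : Finset ι} (hJ : IsIdeal J) (hJd : maxWt w * J.card < d) :
    Set.InjOn Jᶜ.restrict C := by
  intro c₁ h₁ c₂ h₂ hagree
  by_contra hne
  have hnear : dP w k c₁ c₂ ≤ maxWt w * J.card :=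
    wtP_le_maxWt_mul_card w k hJ ((suppPi_sub_subset_iff k).mpr hagree)
  exact ((hd h₁ h₂ hne).trans hnear).not_gt hJd

theorem stmt13_general (w : F → ℕ) (k : ι → ℕ) (C : Finset (∀ i, Fin (k i) → F)) {d : ℕ}
    (hd : (C : Set (∀ i, Fin (k i) → F)).Pairwise fun c₁ c₂ => d ≤ dP w k c₁ c₂)
    {J : Finset ι} (hJ : IsIdeal J) (hJd : maxWt w * J.card < d) :
    ∑ i ∈ J, k i + Nat.clog (Fintype.card F) C.card ≤ ∑ i, k i :=
  sum_add_clog_card_le_of_injOn_restrict_compl k C J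
    (injOn_restrict_compl_of_maxWt_mul_card_lt w k hd hJ hJd)

/-- the Singleton bound for `(P,w,π)`-block codes: if `C` has at least two
codewords, minimum distance `d`, and `r = ⌊(d-1)/M_w⌋`, then for every ideal `J` of cardinality
`r`, `Σ_{i ∈ J} k_i ≤ N - ⌈log_q |C|⌉`. -/
theorem stmt13 (w : F → ℕ) (hw0 : ∀ a : F, w a = 0 ↔ a = 0)
    (hwneg : ∀ a : F, w (-a) = w a) (hwadd : ∀ a b : F, w (a + b) ≤ w a + w b)
    (k : ι → ℕ) (C : Finset (∀ i, Fin (k i) → F)) (hC : 2 ≤ C.card)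
    (d : ℕ) (hd : d = sInf {s : ℕ | ∃ c₁ ∈ C, ∃ c₂ ∈ C, c₁ ≠ c₂ ∧ dP w k c₁ c₂ = s}) :
    ∀ J : Finset ι, IsIdeal J → J.card = (d - 1) / maxWt w →
      ∑ i ∈ J, k i ≤ (∑ i : ι, k i) - Nat.clog (Fintype.card F) C.card := by
  obtain rfl : d = minDist w k C := hd
  intro J hJ hr
  have hJd : maxWt w * J.card < minDist w k C :=
    Nat.lt_of_le_pred (minDist_pos (fun a => (hw0 a).mp) k hC) (hr ▸ Nat.mul_div_le _ _)
  exact Nat.le_sub_of_add_le (stmt13_general w k C (pairwise_minDist_le_dP w k C) hJ hJd)
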